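/- arXiv:2002.00280 — 5 statements merged into one kernel-verified Lean document; each statement's English description precedes it below -/
import Mathlib

section
/- Let a < b, α > 0, μ = exp(-α(b-a)), and let v : [a,b] → ℝ be continuous with v(a) = v(b). Then for every integer p ≥ 1, the iterated operator satisfies D_L^p[v](a) = D_L^p[v](b); that is, the choice B_L = I_L[v](a)/(1-μ) of the boundary coefficient at every level makes each iterate of D_L take equal values at the two endpoints. -/
open Real MeasureTheory

/-- The convolution integral `I_L[v](x) = α·∫_x^b exp(-α(s-x)) v(s) ds`. -/
noncomputable def IL (α a b : ℝ) (v : ℝ → ℝ) (x : ℝ) : ℝ :=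
  α * ∫ s in x..b, Real.exp (-α * (s - x)) * v s

/-- The periodic operator
`D_L[v](x) = v(x) - I_L[v](x) - (I_L[v](a)/(1-μ))·exp(-α(b-x))`, `μ = exp(-α(b-a))`. -/
noncomputable def DL (α a b : ℝ) (v : ℝ → ℝ) : ℝ → ℝ := fun x =>
  v x - IL α a b v x -
    (IL α a b v a / (1 - Real.exp (-α * (b - a)))) * Real.exp (-α * (b - x))

/-- One application of `D_L` preserves equality of the endpoint values. Since `I_L[v](b) = 0`, both
`D_L[v](a) = v(a) - I_L[v](a) - μ I_L[v](a)/(1-μ)` and `D_L[v](b) = v(b) - I_L[v](a)/(1-μ)` subtract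
the same amount `I_L[v](a)/(1-μ)`. -/
theorem DL_endpoints_eq (a b α : ℝ) (hab : a < b) (hα : 0 < α) (v : ℝ → ℝ) (hper : v a = v b) :
    DL α a b v a = DL α a b v b := by
  have hμ : Real.exp (-α * (b - a)) < 1 :=
    Real.exp_lt_one_iff.mpr (by nlinarith [mul_pos hα (sub_pos.mpr hab)])
  have hne : 1 - Real.exp (-α * (b - a)) ≠ 0 := (sub_pos.mpr hμ).ne'
  have hb : IL α a b v b = 0 := by simp [IL]
  simp only [DL, hb, hper, sub_self, mul_zero, Real.exp_zero]
  generalize Real.exp (-α * (b - a)) = μ at hne ⊢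
  field_simp
  ring

/-- With the periodic choice `B_L = I_L[v](a)/(1-μ)` at every level, each iterate
of `D_L` takes equal values at the two endpoints. -/
theorem statement3 (a b α : ℝ) (hab : a < b) (hα : 0 < α)
    (v : ℝ → ℝ) (hv : ContinuousOn v (Set.Icc a b)) (hper : v a = v b) :
    ∀ p : ℕ, 1 ≤ p → (DL α a b)^[p] v a = (DL α a b)^[p] v b := by
  intro p _
  induction p with
  | zero => exact hper
  | succ n ih =>
    rw [Function.iterate_succ_apply']
    refine DL_endpoints_eq a b α hab hα _ ?_
    rcases Nat.eq_zero_or_pos n with rfl | hn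
    · exact hper
    · exact ih hn
end

section
/- Let a < b, α > 0, μ = exp(-α(b-a)), and let v : [a,b] → ℝ be continuous with v(a) = v(b). Then for every integer p ≥ 1, the iterated operator satisfies D_R^p[v](a) = D_R^p[v](b); that is, the choice A_R = I_R[v](b)/(1-μ) of the boundary coefficient at every level makes each iterate of D_R take equal values at the two endpoints. -/
open Real MeasureTheory

/-- The convolution integral `I_R[v](x) = α·∫_a^x exp(-α(x-s)) v(s) ds`. -/
noncomputable def IR (α a b : ℝ) (v : ℝ → ℝ) (x : ℝ) : ℝ :=
  α * ∫ s in a..x, Real.exp (-α * (x - s)) * v s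

/-- The periodic operator
`D_R[v](x) = v(x) - I_R[v](x) - (I_R[v](b)/(1-μ))·exp(-α(x-a))`, `μ = exp(-α(b-a))`. -/
noncomputable def DR (α a b : ℝ) (v : ℝ → ℝ) : ℝ → ℝ := fun x =>
  v x - IR α a b v x -
    (IR α a b v b / (1 - Real.exp (-α * (b - a)))) * Real.exp (-α * (x - a))

/-- The coefficient `A = I_R[v](b)/(1-μ)` is chosen so that `A (1 - μ) = I_R[v](b)`, while
`I_R[v](a) = 0`; hence `D_R[v](a) - D_R[v](b) = v a - v b + I_R[v](b) - A (1 - μ) = v a - v b`.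
`D_R` thus preserves the endpoint difference of an arbitrary function, in particular of each
iterate. -/
theorem DR_sub_endpoints (a b α : ℝ) (hab : a < b) (hα : 0 < α) (v : ℝ → ℝ) :
    DR α a b v a - DR α a b v b = v a - v b := by
  have hμ : 1 - Real.exp (-α * (b - a)) ≠ 0 := by
    have : Real.exp (-α * (b - a)) < 1 :=
      Real.exp_lt_one_iff.mpr (by nlinarith [mul_pos hα (sub_pos.mpr hab)])
    linarith
  have hA := div_mul_cancel₀ (IR α a b v b) hμ
  have hIa : IR α a b v a = 0 := by simp [IR]
  have hea : Real.exp (-α * (a - a)) = 1 := by simp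
  simp only [DR, hIa, hea]
  linear_combination -hA

/-- With the periodic choice `A_R = I_R[v](b)/(1-μ)` at every level, each iterate
of `D_R` takes equal values at the two endpoints. -/
theorem statement4 (a b α : ℝ) (hab : a < b) (hα : 0 < α)
    (v : ℝ → ℝ) (hv : ContinuousOn v (Set.Icc a b)) (hper : v a = v b) :
    ∀ p : ℕ, 1 ≤ p → (DR α a b)^[p] v a = (DR α a b)^[p] v b := by
  intro p hp
  -- Without `1 ≤ p` the induction can start at `p = 0`, where the claim is `hper`.
  clear hp
  induction p with
  | zero => exact hper
  | succ n ih =>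
    rw [Function.iterate_succ_apply']
    linarith [DR_sub_endpoints a b α hab hα ((DR α a b)^[n] v)]
end

section
/- Let a < b, α > 0, μ = exp(-α(b-a)), and let v : [a,b] → ℝ be continuous with v(a) = v(b). Then for every integer p ≥ 1, the iterated operator satisfies D_0^p[v](a) = D_0^p[v](b); that is, the choices A_0 = I_0[v](b)/(1-μ) and B_0 = I_0[v](a)/(1-μ) of the boundary coefficients at every level make each iterate of D_0 take equal values at the two endpoints. -/
open Real MeasureTheory

/-- The convolution integral `I_0[v](x) = (α/2)·∫_a^b exp(-α|x-s|) v(s) ds`. -/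
noncomputable def I0 (α a b : ℝ) (v : ℝ → ℝ) (x : ℝ) : ℝ :=
  (α / 2) * ∫ s in a..b, Real.exp (-α * |x - s|) * v s

/-- The periodic operator
`D_0[v](x) = v(x) - I_0[v](x) - (I_0[v](b)/(1-μ))·exp(-α(x-a)) - (I_0[v](a)/(1-μ))·exp(-α(b-x))`,
with `μ = exp(-α(b-a))`. -/
noncomputable def D0 (α a b : ℝ) (v : ℝ → ℝ) : ℝ → ℝ := fun x =>
  v x - I0 α a b v x -
    (I0 α a b v b / (1 - Real.exp (-α * (b - a)))) * Real.exp (-α * (x - a)) -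
    (I0 α a b v a / (1 - Real.exp (-α * (b - a)))) * Real.exp (-α * (b - x))

/-- One application of `D_0` preserves equality of the endpoint values: both `D_0[w](a)` and
`D_0[w](b)` equal the endpoint value of `w` minus `(I_0[w](a) + I_0[w](b)) / (1 - μ)`. -/
theorem D0_endpoints_eq {a b α : ℝ} (hab : a < b) (hα : 0 < α) {w : ℝ → ℝ} (hw : w a = w b) :
    D0 α a b w a = D0 α a b w b := by
  have hμ : Real.exp (-α * (b - a)) < 1 :=
    Real.exp_lt_one_iff.2 (by nlinarith [mul_pos hα (sub_pos.2 hab)])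
  have hne : 1 - Real.exp (-α * (b - a)) ≠ 0 := (sub_pos.2 hμ).ne'
  simp only [D0, sub_self, mul_zero, Real.exp_zero, hw]
  generalize Real.exp (-α * (b - a)) = μ at hne ⊢
  field_simp
  ring

/-- With the periodic choices `A_0 = I_0[v](b)/(1-μ)` and `B_0 = I_0[v](a)/(1-μ)` at every
level, each iterate of `D_0` takes equal values at the two endpoints. -/
theorem statement5 (a b α : ℝ) (hab : a < b) (hα : 0 < α)
    (v : ℝ → ℝ) (hv : ContinuousOn v (Set.Icc a b)) (hper : v a = v b) :
    ∀ p : ℕ, 1 ≤ p → (D0 α a b)^[p] v a = (D0 α a b)^[p] v b := by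
  intro p hp
  -- The induction starts at `p = 0`, where the claim is the periodicity of `v`.
  clear hp
  induction p with
  | zero => exact hper
  | succ n ih =>
    rw [Function.iterate_succ_apply']
    exact D0_endpoints_eq hab hα ih
end

section
/- For each k ∈ {1, 2, 3} there exists a constant C > 0, independent of α and φ, such that the following holds: for every α > 0 and every (b-a)-periodic function φ : ℝ → ℝ of class C^{k+1}, the partial sum P_k^L[φ], defined by P_k^L[φ](x) = -α·Σ_{p=1}^{k} D_L^p[φ](x) for k = 1, 2, and by P_3^L[φ](x) = -α·Σ_{p=1}^{3} D_L^p[φ](x) + α·D_0[D_L^2[φ]](x) for k = 3, satisfies sup_{x ∈ [a,b]} |φ'(x) - P_k^L[φ](x)| ≤ C·(1/α)^k·sup_{x ∈ ℝ} |φ^{(k+1)}(x)|. -/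
/-!
The operator `SL = 1 - DL` inverts `1 - α⁻¹ d/dx` with periodic boundary conditions: for continuous
`v`, the function `SL v` is the unique `u` with `u' = α (u - v)` and `u a = u b`
(`SL_hasDerivAt`, `SL_endpoints`, `SL_unique`). By uniqueness `SL` commutes with differentiation on
functions with equal endpoint values, so that `DL v = -α⁻¹ SL v'` (`DL_eq`). It is also a
sup-norm contraction on `[a, b]` (`SL_bound`). These facts hold on all of `ℝ`, which lets the
iterates of `DL` be handled as identities between functions.

Telescoping gives the errors for `k = 1, 2` exactly: `-α⁻¹ SL φ''` and `α⁻² SL² φ'''`.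
For `k = 3` the sum over the powers of `DL` leaves `-α⁻³ SL³ φ''''`, and the correction is
`-α D0 (DL² φ)`. On `[a, b]` the operator `D0` is the mean of `DL` and its reflection in the midpoint
of the interval, so that the first-order terms cancel and `|D0 v| ≤ α⁻² sup |v''|` (`D0_bound`);
here `v = DL² φ = α⁻² SL² φ''` has second derivative `α⁻² SL² φ''''`.
-/

open Real MeasureTheory

/-- The left-sided partial sum `P_k^L[φ]`: for `k = 1, 2` it is
`-α·Σ_{p=1}^k D_L^p[φ]`, and for `k = 3` it is
`-α·Σ_{p=1}^3 D_L^p[φ] + α·D_0[D_L^2[φ]]`. -/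
noncomputable def PL (k : ℕ) (α a b : ℝ) (φ : ℝ → ℝ) (x : ℝ) : ℝ :=
  if k = 3 then
    -α * (∑ p ∈ Finset.Icc 1 3, (DL α a b)^[p] φ x) + α * D0 α a b ((DL α a b)^[2] φ) x
  else
    -α * ∑ p ∈ Finset.Icc 1 k, (DL α a b)^[p] φ x

/-- The operator `1 - DL`, the periodic inverse of `1 - α⁻¹ d/dx`. -/
noncomputable def SL (α a b : ℝ) (v : ℝ → ℝ) (x : ℝ) : ℝ :=
  IL α a b v x + (IL α a b v a / (1 - Real.exp (-α * (b - a)))) * Real.exp (-α * (b - x))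

theorem DL_eq_sub (α a b : ℝ) (v : ℝ → ℝ) (x : ℝ) : DL α a b v x = v x - SL α a b v x := by
  unfold DL SL; ring

theorem one_sub_exp_pos {α a b : ℝ} (hα : 0 < α) (hab : a < b) :
    0 < 1 - Real.exp (-α * (b - a)) := by
  have : Real.exp (-α * (b - a)) < 1 := Real.exp_lt_one_iff.2 (by nlinarith [mul_pos hα (sub_pos.2 hab)])
  linarith

theorem IL_eq (α a b : ℝ) (v : ℝ → ℝ) (x : ℝ) :
    IL α a b v x = Real.exp (α * x) * (-α * ∫ s in b..x, Real.exp (-α * s) * v s) := by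
  unfold IL
  have h : ∀ s, Real.exp (-α * (s - x)) * v s = Real.exp (α * x) * (Real.exp (-α * s) * v s) := by
    intro s
    rw [← mul_assoc, ← Real.exp_add]; congr 2; ring
  simp_rw [h]
  rw [intervalIntegral.integral_const_mul, intervalIntegral.integral_symm]; ring

theorem SL_hasDerivAt (α a b : ℝ) {v : ℝ → ℝ} (hv : Continuous v) (x : ℝ) :
    HasDerivAt (SL α a b v) (α * (SL α a b v x - v x)) x := by
  have hc : Continuous fun s => Real.exp (-α * s) * v s := by fun_prop
  have h1 := intervalIntegral.integral_hasDerivAt_right (hc.intervalIntegrable b x)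
    hc.aestronglyMeasurable.stronglyMeasurableAtFilter hc.continuousAt
  have h2 : HasDerivAt (fun x => Real.exp (α * x)) (Real.exp (α * x) * (α * 1)) x :=
    ((hasDerivAt_id x).const_mul α).exp
  have h3 : HasDerivAt (fun x => Real.exp (-α * (b - x)))
      (Real.exp (-α * (b - x)) * (-α * (-1))) x :=
    (((hasDerivAt_id x).const_sub b).const_mul (-α)).exp
  have h4 := (h2.mul (h1.const_mul (-α))).add
    (h3.const_mul (IL α a b v a / (1 - Real.exp (-α * (b - a)))))
  have he : Real.exp (α * x) * Real.exp (-α * x) = 1 := by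
    rw [← Real.exp_add]; simp
  refine (h4.congr_of_eventuallyEq (Filter.Eventually.of_forall fun y => ?_)).congr_deriv ?_
  · simp only [SL, IL_eq α a b v y, Pi.add_apply, Pi.mul_apply]
  · rw [SL, IL_eq α a b v x]
    linear_combination (-α * v x) * he

theorem SL_endpoints {α a b : ℝ} (hα : 0 < α) (hab : a < b) (v : ℝ → ℝ) :
    SL α a b v a = SL α a b v b := by
  have h := (one_sub_exp_pos hα hab).ne'
  have hb : IL α a b v b = 0 := by simp [IL]
  simp only [SL, hb, sub_self, mul_zero, Real.exp_zero]
  generalize Real.exp (-α * (b - a)) = e at *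
  field_simp
  ring

theorem SL_unique {α a b : ℝ} (hα : 0 < α) (hab : a < b) {v u : ℝ → ℝ} (hv : Continuous v)
    (hu : ∀ x, HasDerivAt u (α * (u x - v x)) x) (hup : u a = u b) (x : ℝ) :
    u x = SL α a b v x := by
  -- The difference `w` satisfies `w' = α w`, so `exp (-α y) * w y` is constant.
  have hd : ∀ y, HasDerivAt (fun y => Real.exp (-α * y) * (u y - SL α a b v y)) 0 y := by
    intro y
    have h2 : HasDerivAt (fun x => Real.exp (-α * x)) (Real.exp (-α * y) * (-α * 1)) y :=
      ((hasDerivAt_id y).const_mul (-α)).exp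
    exact (h2.mul ((hu y).sub (SL_hasDerivAt α a b hv y))).congr_deriv
      (by simp only [Pi.sub_apply]; ring)
  have hc := is_const_of_deriv_eq_zero (fun y => (hd y).differentiableAt) (fun y => (hd y).deriv)
  have hw := hc a b
  have hx := hc x a
  rw [← hup, ← SL_endpoints hα hab] at hw
  have hlt : Real.exp (-α * b) < Real.exp (-α * a) := Real.exp_lt_exp.2 (by nlinarith)
  have h0 : u a - SL α a b v a = 0 := by
    have : (Real.exp (-α * a) - Real.exp (-α * b)) * (u a - SL α a b v a) = 0 := by linarith
    rcases mul_eq_zero.1 this with h | h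
    · linarith
    · exact h
  rw [h0, mul_zero] at hx
  rcases mul_eq_zero.1 hx with h | h
  · exact absurd h (Real.exp_pos _).ne'
  · linarith

/-- Both sides solve the periodic problem with right-hand side `v'`. -/
theorem SL_deriv {α a b : ℝ} (hα : 0 < α) (hab : a < b) {v v' : ℝ → ℝ}
    (hv : ∀ x, HasDerivAt v (v' x) x) (hv' : Continuous v') (hp : v a = v b) (x : ℝ) :
    α * (SL α a b v x - v x) = SL α a b v' x := by
  have hc : Continuous v := continuous_iff_continuousAt.2 fun x => (hv x).continuousAt
  refine SL_unique (u := fun x => α * (SL α a b v x - v x)) hα hab hv' (fun y => ?_) ?_ x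
  · exact ((SL_hasDerivAt α a b hc y).sub (hv y)).const_mul α
  · simp only [hp, SL_endpoints hα hab v]

theorem SL_hasDerivAt' {α a b : ℝ} (hα : 0 < α) (hab : a < b) {v v' : ℝ → ℝ}
    (hv : ∀ x, HasDerivAt v (v' x) x) (hv' : Continuous v') (hp : v a = v b) (x : ℝ) :
    HasDerivAt (SL α a b v) (SL α a b v' x) x := by
  have hc : Continuous v := continuous_iff_continuousAt.2 fun x => (hv x).continuousAt
  rw [← SL_deriv hα hab hv hv' hp]
  exact SL_hasDerivAt α a b hc x

theorem SL_continuous (α a b : ℝ) {v : ℝ → ℝ} (hv : Continuous v) : Continuous (SL α a b v) :=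
  continuous_iff_continuousAt.2 fun x => (SL_hasDerivAt α a b hv x).continuousAt

theorem DL_eq {α a b : ℝ} (hα : 0 < α) (hab : a < b) {v v' : ℝ → ℝ}
    (hv : ∀ x, HasDerivAt v (v' x) x) (hv' : Continuous v') (hp : v a = v b) (x : ℝ) :
    DL α a b v x = -(1 / α) * SL α a b v' x := by
  rw [DL_eq_sub, ← SL_deriv hα hab hv hv' hp]
  field_simp
  ring

theorem DL_const_mul (α a b c : ℝ) (v : ℝ → ℝ) (x : ℝ) :
    DL α a b (fun y => c * v y) x = c * DL α a b v x := by
  have h : ∀ z, IL α a b (fun y => c * v y) z = c * IL α a b v z := by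
    intro z
    simp only [IL, mul_left_comm _ c, intervalIntegral.integral_const_mul]
  simp only [DL, h]; ring

theorem IL_bound {α a b M : ℝ} (hα : 0 < α) {v : ℝ → ℝ}
    (hM : ∀ x ∈ Set.Icc a b, |v x| ≤ M) {x : ℝ} (hx : x ∈ Set.Icc a b) :
    |IL α a b v x| ≤ M * (1 - Real.exp (-α * (b - x))) := by
  have hI : ∫ s in x..b, Real.exp (-α * (s - x)) * M
      = M * (1 - Real.exp (-α * (b - x))) / α := by
    have hd : ∀ s ∈ Set.uIcc x b, HasDerivAt (fun s => -(M / α) * Real.exp (-α * (s - x)))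
        (Real.exp (-α * (s - x)) * M) s := by
      intro s _
      have h : HasDerivAt (fun s => Real.exp (-α * (s - x)))
          (Real.exp (-α * (s - x)) * (-α * 1)) s :=
        (((hasDerivAt_id s).sub_const x).const_mul (-α)).exp
      exact (h.const_mul _).congr_deriv (by field_simp)
    rw [intervalIntegral.integral_eq_sub_of_hasDerivAt hd
      (Continuous.intervalIntegrable (by fun_prop) _ _)]
    simp only [sub_self, mul_zero, Real.exp_zero]
    ring
  have hle : |∫ s in x..b, Real.exp (-α * (s - x)) * v s|
      ≤ ∫ s in x..b, Real.exp (-α * (s - x)) * M := by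
    rw [← Real.norm_eq_abs]
    refine intervalIntegral.norm_integral_le_of_norm_le hx.2 ?_
      (Continuous.intervalIntegrable (by fun_prop) _ _)
    refine Filter.Eventually.of_forall fun s hs => ?_
    rw [Real.norm_eq_abs, abs_mul, abs_of_pos (Real.exp_pos _)]
    exact mul_le_mul_of_nonneg_left (hM s ⟨hx.1.trans hs.1.le, hs.2⟩) (Real.exp_pos _).le
  rw [IL, abs_mul, abs_of_pos hα]
  calc _ ≤ α * (M * (1 - Real.exp (-α * (b - x))) / α) :=
        mul_le_mul_of_nonneg_left (hle.trans_eq hI) hα.le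
    _ = _ := by field_simp

theorem SL_bound {α a b M : ℝ} (hα : 0 < α) (hab : a < b) {v : ℝ → ℝ}
    (hM : ∀ x ∈ Set.Icc a b, |v x| ≤ M) {x : ℝ} (hx : x ∈ Set.Icc a b) :
    |SL α a b v x| ≤ M := by
  have hpos := one_sub_exp_pos hα hab
  have h1 := IL_bound hα hM hx
  have h2 : |IL α a b v a / (1 - Real.exp (-α * (b - a)))| ≤ M := by
    rw [abs_div, abs_of_pos hpos, div_le_iff₀ hpos]
    exact IL_bound hα hM ⟨le_rfl, hab.le⟩
  have h3 := mul_le_mul_of_nonneg_right h2 (Real.exp_pos (-α * (b - x))).le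
  rw [SL]
  refine (abs_add_le _ _).trans ?_
  rw [abs_mul, abs_of_pos (Real.exp_pos (-α * (b - x)))]
  linarith

/-- The left half of the integral in `I0` at `x` is the right half, for the reflected function, at
the reflected point. -/
theorem I0_eq {α a b : ℝ} {v : ℝ → ℝ} (hv : Continuous v) {x : ℝ} (hx : x ∈ Set.Icc a b) :
    I0 α a b v x = (IL α a b v x + IL α a b (fun y => v (a + b - y)) (a + b - x)) / 2 := by
  have hc : Continuous fun s => Real.exp (-α * |x - s|) * v s := by fun_prop
  have h1 : ∫ s in x..b, Real.exp (-α * |x - s|) * v s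
      = ∫ s in x..b, Real.exp (-α * (s - x)) * v s := by
    refine intervalIntegral.integral_congr fun s hs => ?_
    rw [Set.uIcc_of_le hx.2] at hs
    rw [abs_sub_comm, abs_of_nonneg (sub_nonneg.2 hs.1)]
  have h2 : ∫ s in a..x, Real.exp (-α * |x - s|) * v s
      = ∫ s in (a + b - x)..b, Real.exp (-α * (s - (a + b - x))) * v (a + b - s) := by
    have h := intervalIntegral.integral_comp_sub_left (a := a + b - x) (b := b)
      (fun s => Real.exp (-α * |x - s|) * v s) (a + b)
    rw [show a + b - b = a by ring, show a + b - (a + b - x) = x by ring] at h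
    rw [← h]
    refine intervalIntegral.integral_congr fun s hs => ?_
    rw [Set.uIcc_of_le (by linarith [hx.1])] at hs
    rw [abs_of_nonneg (by linarith [hs.1]), show x - (a + b - s) = s - (a + b - x) by ring]
  rw [I0, ← intervalIntegral.integral_add_adjacent_intervals (hc.intervalIntegrable a x)
    (hc.intervalIntegrable x b), h1, h2, IL, IL]
  ring

theorem D0_eq {α a b : ℝ} (hab : a < b) {v : ℝ → ℝ} (hv : Continuous v) {x : ℝ}
    (hx : x ∈ Set.Icc a b) :
    D0 α a b v x = (DL α a b v x + DL α a b (fun y => v (a + b - y)) (a + b - x)) / 2 := by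
  have hb (w : ℝ → ℝ) : IL α a b w b = 0 := by simp [IL]
  have e1 : a + b - b = a := by ring
  have e2 : a + b - a = b := by ring
  simp only [D0, DL, I0_eq hv hx, I0_eq hv (Set.left_mem_Icc.2 hab.le),
    I0_eq hv (Set.right_mem_Icc.2 hab.le), e1, e2, hb]
  rw [show a + b - (a + b - x) = x by ring, show b - (a + b - x) = x - a by ring]
  ring

theorem D0_bound {α a b M : ℝ} (hα : 0 < α) (hab : a < b) {v v' v'' : ℝ → ℝ}
    (hv : ∀ x, HasDerivAt v (v' x) x) (hv' : ∀ x, HasDerivAt v' (v'' x) x)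
    (hv'' : Continuous v'') (hp : v a = v b) (hp' : v' a = v' b)
    (hM : ∀ x ∈ Set.Icc a b, |v'' x| ≤ M) {x : ℝ} (hx : x ∈ Set.Icc a b) :
    |D0 α a b v x| ≤ (1 / α) ^ 2 * M := by
  have hc : Continuous v := continuous_iff_continuousAt.2 fun x => (hv x).continuousAt
  have hc' : Continuous v' := continuous_iff_continuousAt.2 fun x => (hv' x).continuousAt
  have e1 : a + b - b = a := by ring
  have e2 : a + b - a = b := by ring
  have hr (y : ℝ) : HasDerivAt (fun y => a + b - y) (-1) y := (hasDerivAt_id y).const_sub (a + b)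
  have hrv : ∀ y, HasDerivAt (fun y => v (a + b - y)) (-v' (a + b - y)) y := fun y =>
    ((hv (a + b - y)).comp y (hr y)).congr_deriv (by ring)
  have hrv' : ∀ y, HasDerivAt (fun y => -v' (a + b - y)) (v'' (a + b - y)) y := fun y =>
    ((hv' (a + b - y)).comp y (hr y)).neg.congr_deriv (by ring)
  have hx' : a + b - x ∈ Set.Icc a b := ⟨by linarith [hx.2], by linarith [hx.1]⟩
  have hcr : Continuous fun y => v'' (a + b - y) := by fun_prop
  have l1 := DL_eq hα hab hv hc' hp x
  have l2 := DL_eq hα hab hv' hv'' hp' x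
  have r1 := DL_eq hα hab hrv (by fun_prop) (by simp only [e1, e2, hp]) (a + b - x)
  have r2 := DL_eq hα hab hrv' hcr (by simp only [e1, e2, hp']) (a + b - x)
  rw [DL_eq_sub] at l2 r2
  have b1 := SL_bound hα hab hM hx
  have b2 := SL_bound hα hab (M := M) (v := fun y => v'' (a + b - y))
    (fun y hy => hM _ ⟨by linarith [hy.2], by linarith [hy.1]⟩) hx'
  rw [show a + b - (a + b - x) = x by ring] at r2
  have key : D0 α a b v x = (1 / α) ^ 2 *
      (-(SL α a b v'' x + SL α a b (fun y => v'' (a + b - y)) (a + b - x)) / 2) := by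
    rw [D0_eq hab hc hx, l1, r1]
    linear_combination (1 / (2 * α)) * l2 + (1 / (2 * α)) * r2
  rw [key, abs_mul, abs_of_nonneg (by positivity)]
  refine mul_le_mul_of_nonneg_left ?_ (by positivity)
  rw [abs_le] at *
  constructor <;> linarith [b1.1, b1.2, b2.1, b2.2]

/-- The identity `DL² v = α⁻² SL² v''`. -/
theorem DL_DL_eq {α a b : ℝ} (hα : 0 < α) (hab : a < b) {v v' v'' : ℝ → ℝ}
    (hv : ∀ x, HasDerivAt v (v' x) x) (hv' : ∀ x, HasDerivAt v' (v'' x) x)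
    (hv'' : Continuous v'') (hp : v a = v b) (hp' : v' a = v' b) :
    DL α a b (DL α a b v) = fun x => (1 / α) ^ 2 * SL α a b (SL α a b v'') x := by
  have hc' : Continuous v' := continuous_iff_continuousAt.2 fun x => (hv' x).continuousAt
  have h1 : DL α a b v = fun x => -(1 / α) * SL α a b v' x :=
    funext (DL_eq hα hab hv hc' hp)
  funext x
  rw [h1, DL_const_mul, DL_eq hα hab (SL_hasDerivAt' hα hab hv' hv'' hp')
    (SL_continuous α a b hv'') (SL_endpoints hα hab _)]
  ring

theorem iteratedDeriv_endpoints {a b : ℝ} {φ : ℝ → ℝ} (hφ : Function.Periodic φ (b - a)) (n : ℕ) :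
    iteratedDeriv n φ a = iteratedDeriv n φ b := by
  have h := iteratedDeriv_comp_add_const n φ (b - a)
  rw [show (fun z => φ (z + (b - a))) = φ from funext hφ] at h
  have := congrFun h a
  simpa using this

theorem iteratedDeriv_hasDerivAt {n m : ℕ} {φ : ℝ → ℝ} (hφ : ContDiff ℝ n φ) (hm : m < n) (x : ℝ) :
    HasDerivAt (iteratedDeriv m φ) (iteratedDeriv (m + 1) φ x) x := by
  rw [iteratedDeriv_succ]
  exact (hφ.differentiable_iteratedDeriv m (by exact_mod_cast hm) x).hasDerivAt

/-- Error estimate for the left-sided periodic partial sums: for `k ∈ {1,2,3}` there is a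
constant `C > 0`, independent of `α` and `φ`, with
`sup_{[a,b]} |φ' - P_k^L[φ]| ≤ C·(1/α)^k·sup_ℝ |φ^{(k+1)}|`. -/
theorem statement7 (a b : ℝ) (hab : a < b) :
    ∀ k ∈ ({1, 2, 3} : Set ℕ), ∃ C > (0 : ℝ), ∀ α > (0 : ℝ), ∀ φ : ℝ → ℝ,
      Function.Periodic φ (b - a) → ContDiff ℝ (k + 1) φ →
      ∀ M : ℝ, (∀ x : ℝ, |iteratedDeriv (k + 1) φ x| ≤ M) →
      ∀ x ∈ Set.Icc a b, |deriv φ x - PL k α a b φ x| ≤ C * (1 / α) ^ k * M := by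
  intro k hk
  refine ⟨2, two_pos, fun α hα φ hper hreg M hM x hx => ?_⟩
  have hreg' : ContDiff ℝ ((k + 1 : ℕ) : WithTop ℕ∞) φ := by exact_mod_cast hreg
  have hM0 : 0 ≤ M := (abs_nonneg _).trans (hM x)
  have hder (m : ℕ) (hm : m < k + 1) := iteratedDeriv_hasDerivAt hreg' hm
  have hend := iteratedDeriv_endpoints (a := a) (b := b) hper
  have hcont (m : ℕ) (hm : m ≤ k + 1) : Continuous (iteratedDeriv m φ) :=
    hreg'.continuous_iteratedDeriv m (by exact_mod_cast hm)
  have h0 : iteratedDeriv 0 φ = φ := iteratedDeriv_zero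
  have hαi : α * (1 / α) = 1 := by field_simp
  have hk1 : 1 ≤ k := by rcases hk with rfl | rfl | rfl <;> norm_num
  -- The first-order facts, common to all `k`.
  have d1 := DL_eq hα hab (hder 0 (by omega)) (hcont 1 (by omega)) (hend 0) x
  have d2 := DL_eq hα hab (hder 1 (by omega)) (hcont 2 (by omega)) (hend 1) x
  rw [h0] at d1
  rw [DL_eq_sub] at d2
  simp only [zero_add, Nat.reduceAdd] at d1 d2
  rw [← iteratedDeriv_one]
  rcases hk with rfl | rfl | rfl
  · have hb := SL_bound hα hab (fun y _ => hM y) hx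
    have key : iteratedDeriv 1 φ x - PL 1 α a b φ x
        = (1 / α) * (-SL α a b (iteratedDeriv 2 φ) x) := by
      simp only [PL, OfNat.one_ne_ofNat, if_false, Finset.Icc_self, Finset.sum_singleton,
        Function.iterate_one, d1]
      linear_combination d2 - SL α a b (iteratedDeriv 1 φ) x * hαi
    rw [key, abs_mul, abs_neg, abs_of_nonneg (by positivity)]
    have := mul_le_mul_of_nonneg_left hb (by positivity : 0 ≤ 1 / α)
    have : 0 ≤ 1 / α * M := by positivity
    linarith
  · have hS3 := SL_continuous α a b (hcont 3 le_rfl)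
    have hb := SL_bound hα hab
      (fun y hy => SL_bound hα hab (fun y _ => hM y) hy) hx
    have dd := DL_DL_eq hα hab (hder 0 (by omega)) (hder 1 (by omega)) (hcont 2 (by omega))
      (hend 0) (hend 1)
    rw [h0] at dd
    have d3 := DL_eq hα hab (SL_hasDerivAt' hα hab (hder 2 (by omega)) (hcont 3 le_rfl) (hend 2))
      hS3 (SL_endpoints hα hab _) x
    rw [DL_eq_sub] at d3
    have key : iteratedDeriv 1 φ x - PL 2 α a b φ x
        = (1 / α) ^ 2 * SL α a b (SL α a b (iteratedDeriv 3 φ)) x := by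
      simp only [PL, show (2 : ℕ) ≠ 3 by norm_num, if_false,
        show Finset.Icc 1 2 = ({1, 2} : Finset ℕ) from rfl,
        Finset.sum_pair (show (1 : ℕ) ≠ 2 by norm_num), Function.iterate_succ,
        Function.iterate_zero, Function.comp_apply, id, d1]
      have d4 := congrFun dd x
      simp only [Nat.reduceAdd] at d3 d4
      rw [d4]
      linear_combination d2 - (1 / α) * d3 + (-SL α a b (iteratedDeriv 1 φ) x
        + (1 / α) * SL α a b (SL α a b (iteratedDeriv 2 φ)) x) * hαi
    rw [key, abs_mul, abs_of_nonneg (by positivity)]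
    have := mul_le_mul_of_nonneg_left hb (by positivity : 0 ≤ (1 / α) ^ 2)
    have : 0 ≤ (1 / α) ^ 2 * M := by positivity
    linarith
  · have c2 := hcont 2 (by omega)
    have c3 := hcont 3 (by omega)
    have c4 := hcont 4 (by omega)
    have S4 := SL_continuous α a b c4
    have SS4 := SL_continuous α a b S4
    have S3 := SL_continuous α a b c3
    have bSS4 : ∀ y ∈ Set.Icc a b, |SL α a b (SL α a b (iteratedDeriv 4 φ)) y| ≤ M :=
      fun y hy => SL_bound hα hab (fun y hy => SL_bound hα hab (fun y _ => hM y) hy) hy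
    have hb := SL_bound hα hab bSS4 hx
    have dd := DL_DL_eq hα hab (hder 0 (by omega)) (hder 1 (by omega)) (hcont 2 (by omega))
      (hend 0) (hend 1)
    rw [h0] at dd
    simp only [Nat.reduceAdd] at dd
    have hS2 := SL_hasDerivAt' hα hab (hder 2 (by omega)) c3 (hend 2)
    have hS3 := SL_hasDerivAt' hα hab (hder 3 (by omega)) c4 (hend 3)
    have hSS2 := SL_hasDerivAt' hα hab hS2 S3 (SL_endpoints hα hab _)
    have hSS3 := SL_hasDerivAt' hα hab hS3 S4 (SL_endpoints hα hab _)
    have d3 := DL_eq hα hab hS2 S3 (SL_endpoints hα hab _) x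
    rw [DL_eq_sub] at d3
    have d5 := DL_eq hα hab hSS2 (SL_continuous α a b S3) (SL_endpoints hα hab _) x
    have d6 := DL_eq hα hab hSS3 SS4 (SL_endpoints hα hab _) x
    rw [DL_eq_sub] at d6
    have hD0 : |D0 α a b (DL α a b (DL α a b φ)) x| ≤ (1 / α) ^ 2 * ((1 / α) ^ 2 * M) := by
      rw [dd]
      refine D0_bound hα hab (fun y => (hSS2 y).const_mul _) (fun y => (hSS3 y).const_mul _)
        (SS4.const_mul _) ?_ ?_ ?_ hx
      · rw [SL_endpoints hα hab]
      · simp only [SL_endpoints hα hab (SL α a b (iteratedDeriv 3 φ))]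
      · intro y hy
        rw [abs_mul, abs_of_nonneg (by positivity)]
        exact mul_le_mul_of_nonneg_left (bSS4 y hy) (by positivity)
    have key : iteratedDeriv 1 φ x - PL 3 α a b φ x
        = (1 / α) ^ 3 * (-SL α a b (SL α a b (SL α a b (iteratedDeriv 4 φ))) x)
          - α * D0 α a b (DL α a b (DL α a b φ)) x := by
      have hs : Finset.Icc 1 3 = ({1, 2, 3} : Finset ℕ) := rfl
      simp only [PL, if_true, hs, Function.iterate_succ,
        Finset.sum_insert (show (1 : ℕ) ∉ ({2, 3} : Finset ℕ) by decide),
        Finset.sum_pair (show (2 : ℕ) ≠ 3 by norm_num),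
        Function.iterate_zero, Function.comp_apply, id, d1]
      have d4 : DL α a b (DL α a b (DL α a b φ)) x
          = (1 / α) ^ 2 * DL α a b (SL α a b (SL α a b (iteratedDeriv 2 φ))) x := by
        rw [dd, DL_const_mul]
      rw [d4, d5, congrFun dd x]
      simp only [Nat.reduceAdd] at d3 d6 ⊢
      linear_combination d2 - (1 / α) * d3 + (1 / α) ^ 2 * d6
        + (-SL α a b (iteratedDeriv 1 φ) x
        + (1 / α) * SL α a b (SL α a b (iteratedDeriv 2 φ)) x
        - (1 / α) ^ 2 * SL α a b (SL α a b (SL α a b (iteratedDeriv 3 φ))) x) * hαi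
    rw [key]
    have h1 : |(1 / α) ^ 3 * (-SL α a b (SL α a b (SL α a b (iteratedDeriv 4 φ))) x)|
        ≤ (1 / α) ^ 3 * M := by
      rw [abs_mul, abs_neg, abs_of_nonneg (by positivity)]
      exact mul_le_mul_of_nonneg_left hb (by positivity)
    have h2 : |α * D0 α a b (DL α a b (DL α a b φ)) x| ≤ (1 / α) ^ 3 * M := by
      rw [abs_mul, abs_of_pos hα]
      refine (mul_le_mul_of_nonneg_left hD0 hα.le).trans_eq ?_
      linear_combination (1 / α) ^ 3 * M * hαi
    have h3 := abs_sub ((1 / α) ^ 3 * (-SL α a b (SL α a b (SL α a b (iteratedDeriv 4 φ))) x))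
      (α * D0 α a b (DL α a b (DL α a b φ)) x)
    linarith
end

section
/- Let λ be a nonzero real number and let s_1 < s_2 < s_3 < s_4 < s_5 < s_6 be distinct real numbers. Then the 6×6 collocation matrix M with rows M_j = (1, s_j, s_j², s_j³, exp(λ·s_j), exp(-λ·s_j)) for j = 1, …, 6 has nonzero determinant. Equivalently, interpolation from the space Γ_6 = span{1, x, x², x³, e^{λx}, e^{-λx}} at any 6 distinct real nodes is uniquely solvable. -/
open Real

/-!
A kernel vector `v` of the collocation matrix gives a function
`f x = v₀ + v₁ x + v₂ x² + v₃ x³ + v₄ e^{λx} + v₅ e^{-λx}` vanishing at the six nodes. Applying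
Rolle's theorem four times (`exists_strictMono_zeros_deriv`), the `k`-th derivative of `f` has at
least `6 - k` distinct zeros for `k ≤ 4`. Since `f⁗ = λ⁴ (v₄ e^{λx} + v₅ e^{-λx})`, its two zeros
force `v₄ = v₅ = 0` (`exp_coeffs_eq_zero`); one zero of each of `f‴`, `f″`, `f′`, `f` then kills
`v₃`, `v₂`, `v₁`, `v₀` in turn. Hence the kernel is trivial.
-/

/-- Rolle's theorem between consecutive zeros: `n + 1` increasing zeros of `f` give `n` increasing
zeros of its derivative. -/
lemma exists_strictMono_zeros_deriv {n : ℕ} {f f' : ℝ → ℝ} (hf : ∀ x, HasDerivAt f (f' x) x)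
    {s : Fin (n + 1) → ℝ} (hs : StrictMono s) (hz : ∀ i, f (s i) = 0) :
    ∃ t : Fin n → ℝ, StrictMono t ∧ ∀ i, f' (t i) = 0 := by
  have key : ∀ i : Fin n, ∃ c ∈ Set.Ioo (s i.castSucc) (s i.succ), f' c = 0 := fun i =>
    exists_hasDerivAt_eq_zero (hs i.castSucc_lt_succ)
      (fun x _ => (hf x).continuousAt.continuousWithinAt)
      ((hz _).trans (hz _).symm) (fun x _ => hf x)
  choose t ht ht0 using key
  refine ⟨t, fun i j hij => ?_, ht0⟩
  calc t i < s i.succ := (ht i).2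
    _ ≤ s j.castSucc := hs.monotone (Fin.succ_le_castSucc_iff.2 hij)
    _ < t j := (ht j).1

lemma exp_coeffs_eq_zero {lam a b x y : ℝ} (hlam : lam ≠ 0) (hxy : x ≠ y)
    (hx : a * exp (lam * x) + b * exp (-lam * x) = 0)
    (hy : a * exp (lam * y) + b * exp (-lam * y) = 0) : a = 0 ∧ b = 0 := by
  -- Multiplying by `exp (lam * z)` leaves a single exponential, which is injective.
  have aux : ∀ z, a * exp (lam * z) + b * exp (-lam * z) = 0 →
      a * exp (2 * (lam * z)) + b = 0 := by
    intro z hz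
    have h1 : exp (2 * (lam * z)) = exp (lam * z) * exp (lam * z) := by
      rw [← exp_add]; ring_nf
    have h2 : exp (-lam * z) * exp (lam * z) = 1 := by
      rw [← exp_add]; simp
    rw [h1]
    linear_combination exp (lam * z) * hz - b * h2
  have hx' := aux x hx
  have hy' := aux y hy
  have hne : exp (2 * (lam * x)) - exp (2 * (lam * y)) ≠ 0 := by
    intro h
    have h3 := exp_injective (sub_eq_zero.1 h)
    exact hxy (mul_left_cancel₀ hlam (by linarith))
  have ha : a = 0 := by
    have : a * (exp (2 * (lam * x)) - exp (2 * (lam * y))) = 0 := by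
      linear_combination hx' - hy'
    exact (mul_eq_zero.1 this).resolve_right hne
  refine ⟨ha, ?_⟩
  simpa [ha] using hx'

/-- The family `c₀ + c₁ x + c₂ x² + c₃ x³ + a e^{λx} + b e^{-λx}` is closed under
differentiation, with explicit coefficients. -/
lemma hasDerivAt_expPoly (lam c₀ c₁ c₂ c₃ a b x : ℝ) :
    HasDerivAt (fun x => c₀ + c₁ * x + c₂ * x ^ 2 + c₃ * x ^ 3 + a * exp (lam * x)
        + b * exp (-lam * x))
      (c₁ + (2 * c₂) * x + (3 * c₃) * x ^ 2 + 0 * x ^ 3 + (a * lam) * exp (lam * x)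
        + (b * -lam) * exp (-lam * x)) x := by
  have he : ∀ m : ℝ, HasDerivAt (fun x => exp (m * x)) (exp (m * x) * (m * 1)) x := fun m =>
    ((hasDerivAt_id x).const_mul m).exp
  refine HasDerivAt.congr_deriv ((((((hasDerivAt_const x c₀).add ((hasDerivAt_id x).const_mul c₁)).add
    ((hasDerivAt_pow 2 x).const_mul c₂)).add ((hasDerivAt_pow 3 x).const_mul c₃)).add
    ((he lam).const_mul a)).add ((he (-lam)).const_mul b)) ?_
  push_cast
  ring

/-- Nonsingularity of the collocation matrix of the six-dimensional space
`Γ_6 = span{1, x, x², x³, e^{λx}, e^{-λx}}` at any six distinct (increasing) real nodes: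
interpolation from `Γ_6` is uniquely solvable. -/
theorem statement13 (lam : ℝ) (hlam : lam ≠ 0) (s : Fin 6 → ℝ) (hs : StrictMono s) :
    (Matrix.of fun j i : Fin 6 =>
        ![1, s j, s j ^ 2, s j ^ 3, Real.exp (lam * s j), Real.exp (-lam * s j)] i).det
      ≠ 0 := by
  intro hdet
  obtain ⟨v, hv, hMv⟩ := Matrix.exists_mulVec_eq_zero_iff.2 hdet
  have h0 : ∀ j, v 0 + v 1 * s j + v 2 * s j ^ 2 + v 3 * s j ^ 3 + v 4 * exp (lam * s j)
      + v 5 * exp (-lam * s j) = 0 := by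
    intro j
    have h := congrFun hMv j
    simp [Matrix.mulVec, dotProduct, Fin.sum_univ_succ] at h
    simp only [neg_mul]
    linear_combination h
  obtain ⟨t₁, ht₁, h1⟩ := exists_strictMono_zeros_deriv (hasDerivAt_expPoly lam _ _ _ _ _ _) hs h0
  obtain ⟨t₂, ht₂, h2⟩ := exists_strictMono_zeros_deriv (hasDerivAt_expPoly lam _ _ _ _ _ _) ht₁ h1
  obtain ⟨t₃, ht₃, h3⟩ := exists_strictMono_zeros_deriv (hasDerivAt_expPoly lam _ _ _ _ _ _) ht₂ h2
  obtain ⟨t₄, ht₄, h4⟩ := exists_strictMono_zeros_deriv (hasDerivAt_expPoly lam _ _ _ _ _ _) ht₃ h3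
  have h4' : ∀ i, v 4 * exp (lam * t₄ i) + v 5 * exp (-lam * t₄ i) = 0 := by
    intro i
    refine (mul_eq_zero.1 ?_).resolve_left (pow_ne_zero 4 hlam)
    linear_combination h4 i
  obtain ⟨v4, v5⟩ := exp_coeffs_eq_zero hlam (ht₄.injective.ne (zero_ne_one)) (h4' 0) (h4' 1)
  have v3 : v 3 = 0 := by simpa [v4, v5] using h3 0
  have v2 : v 2 = 0 := by simpa [v3, v4, v5] using h2 0
  have v1 : v 1 = 0 := by simpa [v2, v3, v4, v5] using h1 0
  have v0 : v 0 = 0 := by simpa [v1, v2, v3, v4, v5] using h0 0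
  refine hv (funext fun i => ?_)
  fin_cases i <;> assumption
end
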